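/- Let k = k(n) be a function of n with k(n) → ∞ and k(n) ≤ n−1, and let Z_k denote the number of chords of C_n of length strictly less than k. Then Z_{k(n)}/k(n) → 1 in probability as n→∞; that is, for every ε > 0, lim_{n→∞} P(|Z_{k(n)}/k(n) − 1| > ε) = 0. -/

import Mathlib

open scoped Classical
open Finset Filter

/-- A chord diagram of size `n`: a fixed-point-free involution of the `2n`
endpoints `0, 1, …, 2n-1` (endpoint `i` here corresponds to the label `i+1`). -/
abbrev ChordDiagram (n : ℕ) :=
  {f : Fin (2*n) → Fin (2*n) // (∀ i, f (f i) = i) ∧ ∀ i, f i ≠ i}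

/-- `c` lies strictly between `a` and `b`. -/
def Between {m : ℕ} (a b c : Fin m) : Prop := min a b < c ∧ c < max a b

/-- The chord of `C` containing endpoint `x` crosses the chord containing endpoint `u`:
exactly one of the two endpoints `u`, `C u` lies strictly between `x` and `C x`. -/
def Crosses {n : ℕ} (C : ChordDiagram n) (x u : Fin (2*n)) : Prop :=
  Xor' (Between x (C.1 x) u) (Between x (C.1 x) (C.1 u))

/-- Uniform probability of an event over all chord diagrams of size `n`. -/
noncomputable def prob (n : ℕ) (E : ChordDiagram n → Prop) : ℝ :=
  ((Finset.univ.filter E).card : ℝ) / ((Finset.univ : Finset (ChordDiagram n)).card : ℝ)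

/-- The degree of the chord of `C` containing endpoint `x`: the number of chords
crossing it (each chord counted once via its smaller endpoint). -/
noncomputable def chordDegree {n : ℕ} (C : ChordDiagram n) (x : Fin (2*n)) : ℕ :=
  (Finset.univ.filter fun u => u < C.1 u ∧ Crosses C x u).card

/-- The length of the chord of `C` containing endpoint `x`: the number of endpoints
on the smaller of the two arcs it determines. -/
def chordLength {n : ℕ} (C : ChordDiagram n) (x : Fin (2*n)) : ℕ :=
  min (max (x:ℕ) (C.1 x : ℕ) - min (x:ℕ) (C.1 x : ℕ) - 1)
      (2*n - (max (x:ℕ) (C.1 x : ℕ) - min (x:ℕ) (C.1 x : ℕ)) - 1)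

/-- Degree of the chord containing endpoint `1` (index `0`). -/
noncomputable def degreeC1 (n : ℕ) (C : ChordDiagram n) : ℕ :=
  if h : 0 < n then chordDegree C ⟨0, by omega⟩ else 0

/-- Length of the chord containing endpoint `1` (index `0`). -/
noncomputable def lengthC1 (n : ℕ) (C : ChordDiagram n) : ℕ :=
  if h : 0 < n then chordLength C ⟨0, by omega⟩ else 0

/-- Membership in the component (w.r.t. the crossing relation) of the chord
containing the root endpoint. -/
def InRootComponent {n : ℕ} (C : ChordDiagram n) (root x : Fin (2*n)) : Prop :=
  x = root ∨ x = C.1 root ∨ Relation.ReflTransGen (fun a b => Crosses C a b) root x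

/-- The chord containing `x` is simple: it joins two (cyclically) consecutive endpoints. -/
def IsSimple {n : ℕ} (C : ChordDiagram n) (x : Fin (2*n)) : Prop :=
  (C.1 x : ℕ) = ((x : ℕ) + 1) % (2*n) ∨ (x : ℕ) = ((C.1 x : ℕ) + 1) % (2*n)

/-- `C` is monolithic (with respect to `root`): every chord not in the root
component is simple, and no two simple chords are next to each other. -/
def Monolithic {n : ℕ} (C : ChordDiagram n) (root : Fin (2*n)) : Prop :=
  (∀ x : Fin (2*n), ¬ InRootComponent C root x → IsSimple C x) ∧
  ¬ ∃ i : Fin (2*n), (C.1 i : ℕ) = ((i : ℕ) + 1) % (2*n) ∧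
      ∃ j : Fin (2*n), (j : ℕ) = ((i : ℕ) + 2) % (2*n) ∧ (C.1 j : ℕ) = ((i : ℕ) + 3) % (2*n)

/-- `L_j`: the number of chords of length `j` in `C`. -/
noncomputable def lengthCount (n : ℕ) (j : ℕ) (C : ChordDiagram n) : ℕ :=
  (Finset.univ.filter fun x : Fin (2*n) => x < C.1 x ∧ chordLength C x = j).card

/-- The endpoints of chords of `C` of length at least `k`. -/
noncomputable def lenAtLeast (n k : ℕ) (C : ChordDiagram n) : Finset (Fin (2*n)) :=
  Finset.univ.filter fun x => k ≤ chordLength C x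

/-- The number of chords with endpoints in `S` crossing the chord containing `x`. -/
noncomputable def degreeIn {n : ℕ} (C : ChordDiagram n) (S : Finset (Fin (2*n)))
    (x : Fin (2*n)) : ℕ :=
  (S.filter fun u => u < C.1 u ∧ Crosses C x u).card

/-- `S` (a chord-closed set of endpoints) is a set of chords each crossing at
least `k` other chords of `S`. -/
def IsCore {n : ℕ} (C : ChordDiagram n) (k : ℕ) (S : Finset (Fin (2*n))) : Prop :=
  (∀ x ∈ S, C.1 x ∈ S) ∧ ∀ x ∈ S, k ≤ degreeIn C S x

/-- The `k`-core: the union of all sets of chords in which every chord crosses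
at least `k` other chords of the set. -/
noncomputable def kCore (n k : ℕ) (C : ChordDiagram n) : Finset (Fin (2*n)) :=
  Finset.univ.filter fun x => ∃ S : Finset (Fin (2*n)), IsCore C k S ∧ x ∈ S

/-- The number of chords in the `k`-core of `C`. -/
noncomputable def kCoreSize (n k : ℕ) (C : ChordDiagram n) : ℕ :=
  ((kCore n k C).filter fun x => x < C.1 x).card

/-- `Z_k`: the number of chords of length strictly less than `k`. -/
noncomputable def shortCount (n k : ℕ) (C : ChordDiagram n) : ℕ :=
  (Finset.univ.filter fun x : Fin (2*n) => x < C.1 x ∧ chordLength C x < k).card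

/-- `C` contains a balanced clique of size `m`: a set of `m` pairwise crossing
chords with exactly one endpoint in each of the `2m` blocks of length `⌊n/m⌋`. -/
def HasBalancedClique (n m : ℕ) (C : ChordDiagram n) : Prop :=
  ∃ S : Finset (Fin (2*n)),
    (∀ x ∈ S, C.1 x ∈ S) ∧
    (∀ x ∈ S, ∀ u ∈ S, u ≠ x → u ≠ C.1 x → Crosses C x u) ∧
    (∀ t : ℕ, 1 ≤ t → t ≤ 2*m →
      (S.filter fun x => (t-1) * (n/m) ≤ (x:ℕ) ∧ (x:ℕ) < t * (n/m)).card = 1)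

/-- An oriented chord diagram: a chord diagram together with auxiliary fair-coin
bits; the bit attached to a crossing pair of chords (indexed by their smaller
endpoints) decides which chord over-crosses the other. -/
abbrev OrientedChordDiagram (n : ℕ) := ChordDiagram n × (Fin (2*n) → Fin (2*n) → Bool)

/-- The smaller endpoint of the chord of `C` containing `x`. -/
def chordRep {n : ℕ} (C : ChordDiagram n) (x : Fin (2*n)) : Fin (2*n) := min x (C.1 x)

/-- In the oriented diagram `D`, the chord containing `x` crosses and
over-crosses the chord containing `u`. -/
def OverD {n : ℕ} (D : OrientedChordDiagram n) (x u : Fin (2*n)) : Prop :=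
  Crosses D.1 x u ∧
    ((chordRep D.1 x ≤ chordRep D.1 u ∧ D.2 (chordRep D.1 x) (chordRep D.1 u) = true) ∨
     (chordRep D.1 u < chordRep D.1 x ∧ D.2 (chordRep D.1 u) (chordRep D.1 x) = false))

/-- Uniform probability of an event over all oriented chord diagrams of size `n`
(this yields a uniformly random diagram with each crossing oriented by an
independent fair coin). -/
noncomputable def probD (n : ℕ) (E : OrientedChordDiagram n → Prop) : ℝ :=
  ((Finset.univ.filter E).card : ℝ) /
    ((Finset.univ : Finset (OrientedChordDiagram n)).card : ℝ)

/-- The chords (given by their endpoints in `S`) are strongly connected in the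
directed intersection graph of `D`, using only chords of `S`. -/
def StronglyConnectedIn {n : ℕ} (D : OrientedChordDiagram n) (S : Set (Fin (2*n))) : Prop :=
  ∀ c ∈ S, ∀ d ∈ S,
    Relation.ReflTransGen (fun a b => a ∈ S ∧ b ∈ S ∧ OverD D a b) c d

/-- The number of chords with both endpoints in the cyclic block
`{i, i+1, …, i+t-1}` (mod `2n`). -/
noncomputable def chordsInBlock (n : ℕ) (C : ChordDiagram n) (i t : ℕ) : ℕ :=
  (Finset.univ.filter fun x : Fin (2*n) => x < C.1 x ∧
    (∃ a < t, (x:ℕ) = (i + a) % (2*n)) ∧ (∃ a < t, ((C.1 x : ℕ)) = (i + a) % (2*n))).card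

/-- The chord of `x` reaches the chord of `u` in the directed intersection graph
(of the whole diagram); endpoints of the same chord represent the same vertex. -/
def ReachChord {n : ℕ} (D : OrientedChordDiagram n) (x u : Fin (2*n)) : Prop :=
  u = x ∨ u = D.1.1 x ∨ Relation.ReflTransGen (fun a b => OverD D a b) x u

/-- The chords of `x` and `u` lie in the same strong component. -/
def MutualReach {n : ℕ} (D : OrientedChordDiagram n) (x u : Fin (2*n)) : Prop :=
  ReachChord D x u ∧ ReachChord D u x

/-- The number of single-chord strong components of `D`. -/
noncomputable def singleCount (n : ℕ) (D : OrientedChordDiagram n) : ℕ :=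
  (Finset.univ.filter fun x : Fin (2*n) =>
    x < D.1.1 x ∧ ∀ u : Fin (2*n), u ≠ x → u ≠ D.1.1 x → ¬ MutualReach D x u).card

/-!
A second moment argument. `2 * Z` counts the ordered pairs of distinct points that lie close enough
together to bound a short chord and are matched. There are `2n * 2k` such pairs. A given pair is
matched with probability `1 / (2n - 1)`, and two disjoint pairs are both matched with probability
`1 / ((2n - 1) (2n - 3))`, so matchings of disjoint pairs are almost uncorrelated, while two
distinct pairs that overlap are compatible only if one is the reverse of the other. Hence
`E (Z - k)² ≤ 5k`, which is `o(k²)`, and Chebyshev's inequality gives concentration at `k`.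
-/

/-- A perfect matching of the points of `α`, encoded by the involution exchanging the two ends of
each edge. `ChordDiagram n` is `PerfectMatching (Fin (2 * n))`. -/
abbrev PerfectMatching (α : Type*) :=
  {f : α → α // (∀ i, f (f i) = i) ∧ ∀ i, f i ≠ i}

namespace PerfectMatching

variable {α : Type*}

/-- The relabelling of perfect matchings by a permutation `σ` of the points; the uniform
distribution is invariant under it. -/
def conj (σ : Equiv.Perm α) : PerfectMatching α ≃ PerfectMatching α :=
  σ.conj.subtypeEquiv fun f => by
    simp_rw [← σ.forall_congr_right (q := fun j => σ.conj f (σ.conj f j) = j),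
      ← σ.forall_congr_right (q := fun j => σ.conj f j ≠ j), Equiv.conj_apply,
      σ.symm_apply_apply, σ.injective.eq_iff, σ.injective.ne_iff]

lemma conj_apply_eq_iff (σ : Equiv.Perm α) (f : PerfectMatching α) {a b : α} :
    (conj σ f).1 (σ a) = σ b ↔ f.1 a = b := by
  simp [conj, Equiv.conj_apply]

lemma apply_eq_comm (f : PerfectMatching α) {a b : α} : f.1 a = b ↔ f.1 b = a :=
  ⟨fun h => h ▸ f.2.1 a, fun h => h ▸ f.2.1 b⟩

lemma apply_eq_apply_iff (f : PerfectMatching α) {a b : α} : f.1 a = f.1 b ↔ a = b :=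
  (Function.LeftInverse.injective f.2.1).eq_iff

lemma eq_or_eq_swap_of_apply_eq [DecidableEq α] (f : PerfectMatching α) {a b c d : α}
    (hab : f.1 a = b) (hcd : f.1 c = d) (h : c ∈ ({a, b} : Finset α) ∨ d ∈ ({a, b} : Finset α)) :
    (c, d) = (a, b) ∨ (c, d) = (b, a) := by
  subst hab hcd
  simp only [mem_insert, mem_singleton, f.apply_eq_apply_iff, Prod.mk.injEq] at h ⊢
  rcases h with (rfl | rfl) | rfl | rfl <;> simp [f.2.1]

lemma card_filter_eq_two_mul_card_filter_lt [Fintype α] [LinearOrder α] (f : PerfectMatching α)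
    (P : α → Prop) [DecidablePred P] (hP : ∀ x, P (f.1 x) ↔ P x) :
    #{x | P x} = 2 * #{x | x < f.1 x ∧ P x} := by
  have hswap : #{x | f.1 x < x ∧ P x} = #{x | x < f.1 x ∧ P x} :=
    card_nbij' f.1 f.1 (by simp [Set.MapsTo, f.2.1, hP]) (by simp [Set.MapsTo, f.2.1, hP])
      (fun x _ => f.2.1 x) fun x _ => f.2.1 x
  have hsplit : ({x | P x} : Finset α) =
      ({x | x < f.1 x ∧ P x} : Finset α) ∪ ({x | f.1 x < x ∧ P x} : Finset α) := by
    ext x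
    have := (f.2.2 x).lt_or_gt
    simp only [mem_filter_univ, mem_union]
    tauto
  have hdisj : Disjoint ({x | x < f.1 x ∧ P x} : Finset α) ({x | f.1 x < x ∧ P x} : Finset α) :=
    disjoint_filter.2 fun x _ hx hx' => lt_asymm hx.1 hx'.1
  rw [hsplit, card_union_of_disjoint hdisj, hswap, two_mul]

/-- The number of pairs in `S` matched by `f`. Pairs are ordered: an edge of the matching is
counted twice if `S` contains both of its orientations. -/
def matchedCount [DecidableEq α] (S : Finset (α × α)) (f : PerfectMatching α) : ℕ :=
  #{p ∈ S | f.1 p.1 = p.2}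

lemma matchedCount_filter [Fintype α] [DecidableEq α] (r : α → α → Prop)
    [∀ a b, Decidable (r a b)] (f : PerfectMatching α) :
    matchedCount {p | r p.1 p.2} f = #{x | r x (f.1 x)} := by
  refine card_nbij' Prod.fst (fun x => (x, f.1 x)) ?_ ?_ ?_ ?_ <;>
    simp +contextual [Set.MapsTo, Set.LeftInvOn]

section Uniform

variable [DecidableEq α] [Fintype (PerfectMatching α)]

open scoped BigOperators

-- By the symmetry between the elements of `T`, given `A` the partner of `c` is uniform on `T`.
lemma card_mul_expect_and_apply_eq {A : PerfectMatching α → Prop} [DecidablePred A] {c d : α}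
    {T : Finset α} (hAT : ∀ f, A f → f.1 c ∈ T) (hcT : c ∉ T)
    (hA : ∀ d ∈ T, ∀ e ∈ T, ∀ f, A f ↔ A (conj (Equiv.swap d e) f)) (hd : d ∈ T) :
    (#T : ℝ) * 𝔼 f, (if A f ∧ f.1 c = d then 1 else 0) = 𝔼 f, if A f then 1 else 0 := by
  have hsymm : ∀ e ∈ T, (𝔼 f, if A f ∧ f.1 c = e then (1 : ℝ) else 0) =
      𝔼 f, if A f ∧ f.1 c = d then 1 else 0 := by
    intro e he
    have hc : Equiv.swap e d c = c :=
      Equiv.swap_apply_of_ne_of_ne (fun h => hcT (h ▸ he)) (fun h => hcT (h ▸ hd))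
    refine Fintype.expect_equiv (conj (Equiv.swap e d)) _ _ fun f => if_congr ?_ rfl rfl
    have := conj_apply_eq_iff (Equiv.swap e d) f (a := c) (b := e)
    rw [hc, Equiv.swap_apply_left] at this
    rw [← hA e he d hd, this]
  calc (#T : ℝ) * 𝔼 f, (if A f ∧ f.1 c = d then 1 else 0)
      = ∑ e ∈ T, 𝔼 f, if A f ∧ f.1 c = e then 1 else 0 := by
        rw [sum_congr rfl hsymm, sum_const, nsmul_eq_mul]
    _ = 𝔼 f, ∑ e ∈ T, if A f ∧ f.1 c = e then 1 else 0 := (expect_sum_comm _ _ _).symm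
    _ = 𝔼 f, if A f then 1 else 0 := by
        refine expect_congr rfl fun f _ => ?_
        by_cases hf : A f <;> simp [hf, hAT]

variable [Fintype α] [Nonempty (PerfectMatching α)]

lemma expect_apply_eq {a b : α} (hab : a ≠ b) :
    (𝔼 f : PerfectMatching α, if f.1 a = b then (1 : ℝ) else 0) =
      1 / ((Fintype.card α : ℝ) - 1) := by
  have hcard : 1 < Fintype.card α := Fintype.one_lt_card_iff.2 ⟨a, b, hab⟩
  have h := card_mul_expect_and_apply_eq (A := fun _ => True) (c := a) (d := b) (T := {a}ᶜ)
    (by simpa using fun f : PerfectMatching α => f.2.2 a) (by simp) (by simp)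
    (by simpa using hab.symm)
  rw [card_compl, card_singleton, Nat.cast_sub hcard.le, Nat.cast_one] at h
  simp only [true_and, if_true, Fintype.expect_const] at h
  rwa [eq_div_iff (by simpa [sub_eq_zero] using hcard.ne'), mul_comm]

lemma expect_apply_eq_and_apply_eq {a b c d : α} (hab : a ≠ b) (hcd : c ≠ d)
    (hc : c ∉ ({a, b} : Finset α)) (hd : d ∉ ({a, b} : Finset α)) :
    (𝔼 f : PerfectMatching α, if f.1 a = b ∧ f.1 c = d then (1 : ℝ) else 0) =
      1 / (((Fintype.card α : ℝ) - 1) * (Fintype.card α - 3)) := by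
  have hT : #({c, a, b} : Finset α) = 3 := by
    rw [card_insert_of_notMem hc, card_pair hab]
  have hcard : 3 < Fintype.card α := by
    rw [← hT, card_lt_iff_ne_univ]
    exact fun h => by simpa [hcd.symm, hd] using h.ge (mem_univ d)
  have hcard' : (3 : ℝ) < Fintype.card α := by exact_mod_cast hcard
  simp only [mem_insert, mem_singleton, not_or] at hc hd
  have h := card_mul_expect_and_apply_eq (A := fun f => f.1 a = b) (c := c) (d := d)
    (T := {c, a, b}ᶜ) ?partner (by simp) ?symm (by simpa [hcd.symm] using hd)
  case partner =>
    rintro f rfl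
    simpa [f.2.2 c, f.apply_eq_apply_iff, hc.1, f.apply_eq_comm (a := c)] using Ne.symm hc.2
  case symm =>
    intro d hd e he f
    simp only [mem_compl, mem_insert, mem_singleton, not_or] at hd he
    have := conj_apply_eq_iff (Equiv.swap d e) f (a := a) (b := b)
    rw [Equiv.swap_apply_of_ne_of_ne (Ne.symm hd.2.1) (Ne.symm he.2.1),
      Equiv.swap_apply_of_ne_of_ne (Ne.symm hd.2.2) (Ne.symm he.2.2)] at this
    exact this.symm
  rw [card_compl, hT, Nat.cast_sub hcard.le, expect_apply_eq hab, Nat.cast_ofNat] at h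
  rw [← div_div, ← h, mul_div_cancel_left₀]
  linarith

lemma expect_apply_eq_and_apply_eq_le (hα : 3 < Fintype.card α) {p q : α × α} (hp : p.1 ≠ p.2)
    (hq : q.1 ≠ q.2) :
    (𝔼 f : PerfectMatching α, if f.1 p.1 = p.2 ∧ f.1 q.1 = q.2 then (1 : ℝ) else 0) ≤
      1 / (((Fintype.card α : ℝ) - 1) * (Fintype.card α - 3)) +
        ((if q = p then 1 / ((Fintype.card α : ℝ) - 1) else 0) +
          if q = p.swap then 1 / ((Fintype.card α : ℝ) - 1) else 0) := by
  have hα' : (3 : ℝ) < Fintype.card α := by exact_mod_cast hα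
  have h₁ : (0 : ℝ) ≤ 1 / ((Fintype.card α : ℝ) - 1) := one_div_nonneg.2 (by linarith)
  have h₂ : (0 : ℝ) ≤ 1 / (((Fintype.card α : ℝ) - 1) * (Fintype.card α - 3)) :=
    one_div_nonneg.2 (mul_nonneg (by linarith) (by linarith))
  obtain ⟨a, b⟩ := p
  obtain ⟨c, d⟩ := q
  dsimp only at hp hq
  rw [Prod.swap_prod_mk]
  by_cases hdisj : c ∉ ({a, b} : Finset α) ∧ d ∉ ({a, b} : Finset α)
  · rw [expect_apply_eq_and_apply_eq hp hq hdisj.1 hdisj.2]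
    split_ifs <;> linarith
  by_cases hsame : (c, d) = (a, b) ∨ (c, d) = (b, a)
  · have hle : (𝔼 f : PerfectMatching α, if f.1 a = b ∧ f.1 c = d then (1 : ℝ) else 0) ≤
        1 / ((Fintype.card α : ℝ) - 1) := by
      rw [← expect_apply_eq hp]
      exact expect_le_expect fun f _ => by split_ifs <;> simp_all
    rcases hsame with h | h <;> rw [if_pos h] <;> split_ifs <;> linarith
  · have hempty : ∀ f : PerfectMatching α, ¬(f.1 a = b ∧ f.1 c = d) := fun f hf =>
      hsame (f.eq_or_eq_swap_of_apply_eq hf.1 hf.2 (by tauto))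
    simp only [hempty, if_false, expect_const_zero]
    split_ifs <;> linarith

lemma expect_matchedCount {S : Finset (α × α)} (hS : S ⊆ univ.offDiag) :
    𝔼 f, (matchedCount S f : ℝ) = #S / ((Fintype.card α : ℝ) - 1) := by
  simp only [matchedCount, natCast_card_filter]
  rw [expect_sum_comm, sum_congr rfl fun p hp => expect_apply_eq (mem_offDiag.1 (hS hp)).2.2,
    sum_const, nsmul_eq_mul, mul_one_div]

lemma expect_matchedCount_sq_le (hα : 3 < Fintype.card α) {S : Finset (α × α)}
    (hS : S ⊆ univ.offDiag) :
    𝔼 f, (matchedCount S f : ℝ) ^ 2 ≤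
      #S ^ 2 / (((Fintype.card α : ℝ) - 1) * (Fintype.card α - 3)) +
        2 * #S / ((Fintype.card α : ℝ) - 1) := by
  have hα' : (3 : ℝ) < Fintype.card α := by exact_mod_cast hα
  have hne : ∀ p ∈ S, p.1 ≠ p.2 := fun p hp => (mem_offDiag.1 (hS hp)).2.2
  set u : ℝ := 1 / ((Fintype.card α : ℝ) - 1) with hu
  set v : ℝ := 1 / (((Fintype.card α : ℝ) - 1) * (Fintype.card α - 3)) with hv
  have hu0 : 0 ≤ u := one_div_nonneg.2 (by linarith)
  have hrow : ∀ p, ∑ q ∈ S, (v + ((if q = p then u else 0) + if q = p.swap then u else 0)) ≤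
      #S * v + 2 * u := by
    intro p
    rw [sum_add_distrib, sum_add_distrib, sum_const, nsmul_eq_mul, sum_ite_eq', sum_ite_eq']
    split_ifs <;> linarith
  calc 𝔼 f, (matchedCount S f : ℝ) ^ 2
      = ∑ p ∈ S, ∑ q ∈ S, 𝔼 f : PerfectMatching α,
          if f.1 p.1 = p.2 ∧ f.1 q.1 = q.2 then (1 : ℝ) else 0 := by
        simp only [matchedCount, natCast_card_filter, sq, sum_mul_sum, expect_sum_comm, ite_and,
          ite_mul, one_mul, zero_mul]
    _ ≤ ∑ p ∈ S, ∑ q ∈ S, (v + ((if q = p then u else 0) + if q = p.swap then u else 0)) :=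
        sum_le_sum fun p hp => sum_le_sum fun q hq =>
          expect_apply_eq_and_apply_eq_le hα (hne p hp) (hne q hq)
    _ ≤ ∑ p ∈ S, (#S * v + 2 * u) := sum_le_sum fun p _ => hrow p
    _ = _ := by rw [sum_const, nsmul_eq_mul, hu, hv]; ring

end Uniform

end PerfectMatching

/-- The number of points on the shorter of the two arcs between `x` and `y`, for `m` points on a
circle. -/
def arcLength {m : ℕ} (x y : Fin m) : ℕ :=
  min (max (x : ℕ) y - min (x : ℕ) y - 1) (m - (max (x : ℕ) y - min (x : ℕ) y) - 1)

lemma arcLength_comm {m : ℕ} (x y : Fin m) : arcLength x y = arcLength y x := by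
  rw [arcLength, arcLength, max_comm, min_comm (x : ℕ)]

lemma arcLength_self_add {m : ℕ} (x d : Fin m) :
    arcLength x (x + d) = min ((d : ℕ) - 1) (m - d - 1) := by
  rw [arcLength, Fin.val_add_eq_ite]
  split_ifs <;> omega

lemma card_arcLength_lt {m k : ℕ} (hk : 2 * k < m) (x : Fin m) :
    #{y | x ≠ y ∧ arcLength x y < k} = 2 * k := by
  have : NeZero m := ⟨by omega⟩
  have himage : ({d | d ≠ 0 ∧ min ((d : ℕ) - 1) (m - d - 1) < k} : Finset (Fin m)).map
      Fin.valEmbedding = Icc 1 k ∪ Ico (m - k) m := by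
    ext i
    simp only [Finset.mem_map, mem_filter_univ, Fin.valEmbedding_apply, mem_union, mem_Icc,
      mem_Ico, Fin.ne_iff_vne, Fin.val_zero]
    exact ⟨fun ⟨d, hd, hdi⟩ => by omega, fun hi => ⟨⟨i, by omega⟩, by dsimp only; omega, rfl⟩⟩
  have hdisj : Disjoint (Icc 1 k) (Ico (m - k) m) :=
    disjoint_left.2 fun i => by simp only [mem_Icc, mem_Ico]; omega
  calc #{y | x ≠ y ∧ arcLength x y < k}
      = #{d : Fin m | d ≠ 0 ∧ min ((d : ℕ) - 1) (m - d - 1) < k} :=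
        (card_equiv (Equiv.addLeft x) fun d => by
          simp only [mem_filter_univ, Equiv.coe_addLeft, arcLength_self_add, ne_eq,
            left_eq_add]).symm
    _ = #(Icc 1 k ∪ Ico (m - k) m) := by rw [← himage, card_map]
    _ = 2 * k := by
        rw [card_union_of_disjoint hdisj, Nat.card_Icc, Nat.card_Ico]
        omega

/-- The ordered pairs of distinct points on a circle of `m` points that a chord of length less than
`k` can join. -/
def shortPairs (m k : ℕ) : Finset (Fin m × Fin m) :=
  {p | p.1 ≠ p.2 ∧ arcLength p.1 p.2 < k}

lemma shortPairs_subset_offDiag (m k : ℕ) : shortPairs m k ⊆ univ.offDiag := fun p hp => by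
  simpa using (mem_filter.1 hp).2.1

lemma card_shortPairs {m k : ℕ} (hk : 2 * k < m) : #(shortPairs m k) = 2 * k * m := by
  rw [shortPairs, card_filter, Fintype.sum_prod_type]
  simp only [← card_filter, card_arcLength_lt hk, sum_const, card_univ, Fintype.card_fin,
    smul_eq_mul, mul_comm]

namespace ChordDiagram

open scoped BigOperators

lemma nonempty (n : ℕ) : Nonempty (ChordDiagram n) :=
  ⟨⟨Fin.rev, Fin.rev_rev, fun i h => by
    have := congrArg Fin.val h
    rw [Fin.val_rev] at this
    omega⟩⟩

lemma chordLength_eq_arcLength {n : ℕ} (C : ChordDiagram n) (x : Fin (2 * n)) :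
    chordLength C x = arcLength x (C.1 x) :=
  rfl

lemma matchedCount_shortPairs (n k : ℕ) (C : ChordDiagram n) :
    PerfectMatching.matchedCount (shortPairs (2 * n) k) C = 2 * shortCount n k C := by
  rw [shortPairs, PerfectMatching.matchedCount_filter (fun x y => x ≠ y ∧ arcLength x y < k) C,
    PerfectMatching.card_filter_eq_two_mul_card_filter_lt C]
  · simp only [shortCount, chordLength_eq_arcLength, (C.2.2 _).symm, ne_eq, not_false_eq_true,
      true_and]
    congr!
  · intro x
    rw [C.2.1, arcLength_comm, ne_comm]

lemma shortCount_eq_matchedCount_div_two (n k : ℕ) (C : ChordDiagram n) :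
    (shortCount n k C : ℝ) = PerfectMatching.matchedCount (shortPairs (2 * n) k) C / 2 := by
  rw [matchedCount_shortPairs]
  push_cast
  ring

lemma expect_shortCount {n k : ℕ} (hk : k < n) :
    𝔼 C, (shortCount n k C : ℝ) = k * (2 * n) / (2 * n - 1) := by
  have := nonempty n
  simp only [shortCount_eq_matchedCount_div_two, ← expect_div]
  rw [PerfectMatching.expect_matchedCount (shortPairs_subset_offDiag (2 * n) k),
    card_shortPairs (by omega), Fintype.card_fin]
  push_cast
  ring

lemma expect_shortCount_sq_le {n k : ℕ} (hk : k < n) (hn : 2 ≤ n) :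
    𝔼 C, (shortCount n k C : ℝ) ^ 2 ≤
      (k * (2 * n)) ^ 2 / ((2 * n - 1) * (2 * n - 3)) + k * (2 * n) / (2 * n - 1) := by
  have := nonempty n
  have h := PerfectMatching.expect_matchedCount_sq_le (by rw [Fintype.card_fin]; omega)
    (shortPairs_subset_offDiag (2 * n) k)
  rw [card_shortPairs (by omega), Fintype.card_fin] at h
  push_cast at h
  simp only [shortCount_eq_matchedCount_div_two, div_pow, ← expect_div]
  linear_combination h / 4

lemma expect_shortCount_sub_sq_le {n k : ℕ} (hk₀ : 0 < k) (hk : k < n) :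
    𝔼 C, ((shortCount n k C : ℝ) - k) ^ 2 ≤ 5 * k := by
  have := nonempty n
  have hk₁ : (1 : ℝ) ≤ k := by exact_mod_cast hk₀
  have hkn : (k : ℝ) + 1 ≤ n := by exact_mod_cast hk
  have h₁ : (0 : ℝ) < 2 * n - 1 := by linarith
  have h₃ : (0 : ℝ) < 2 * n - 3 := by linarith
  have hexpand : 𝔼 C, ((shortCount n k C : ℝ) - k) ^ 2 =
      𝔼 C, (shortCount n k C : ℝ) ^ 2 - 2 * k * 𝔼 C, (shortCount n k C : ℝ) + k ^ 2 := by
    rw [mul_expect, ← expect_sub_distrib,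
      ← Fintype.expect_const (ι := ChordDiagram n) ((k : ℝ) ^ 2), ← expect_add_distrib]
    exact expect_congr rfl fun C _ => by ring
  have hsecond := expect_shortCount_sq_le hk (by omega)
  calc 𝔼 C, ((shortCount n k C : ℝ) - k) ^ 2
      ≤ (k * (2 * n)) ^ 2 / ((2 * n - 1) * (2 * n - 3)) + k * (2 * n) / (2 * n - 1) -
          2 * k * (k * (2 * n) / (2 * n - 1)) + k ^ 2 := by
        rw [hexpand, expect_shortCount hk]
        linarith
    _ = k * ((k * (4 * n + 3) + 2 * n * (2 * n - 3)) / ((2 * n - 1) * (2 * n - 3))) := by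
        field_simp
        ring
    _ ≤ k * 5 := by
        gcongr
        rw [div_le_iff₀ (by positivity)]
        nlinarith
    _ = 5 * k := mul_comm _ _

lemma prob_nonneg {n : ℕ} (E : ChordDiagram n → Prop) : 0 ≤ prob n E := by
  unfold prob
  positivity

lemma prob_lt_abs_le {n : ℕ} (X : ChordDiagram n → ℝ) {ε : ℝ} (hε : 0 < ε) :
    prob n (fun C => ε < |X C|) ≤ (𝔼 C, X C ^ 2) / ε ^ 2 := by
  have hprob : prob n (fun C => ε < |X C|) = 𝔼 C, if ε < |X C| then (1 : ℝ) else 0 := by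
    rw [prob, expect_eq_sum_div_card, sum_boole]
  rw [hprob, expect_div]
  refine expect_le_expect fun C _ => ?_
  split_ifs with hC
  · rw [one_le_div (by positivity), ← sq_abs (X C)]
    gcongr
  · positivity

lemma prob_lt_abs_shortCount_div_sub_one_le {n k : ℕ} (hk₀ : 0 < k) (hk : k < n) {ε : ℝ}
    (hε : 0 < ε) :
    prob n (fun C => ε < |(shortCount n k C : ℝ) / k - 1|) ≤ 5 / ε ^ 2 * (k : ℝ)⁻¹ := by
  calc prob n (fun C => ε < |(shortCount n k C : ℝ) / k - 1|)
      ≤ (𝔼 C, ((shortCount n k C : ℝ) / k - 1) ^ 2) / ε ^ 2 := prob_lt_abs_le _ hε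
    _ = (𝔼 C, ((shortCount n k C : ℝ) - k) ^ 2) / k ^ 2 / ε ^ 2 := by
        rw [expect_div _ _ ((k : ℝ) ^ 2)]
        congr! 3 with C
        field_simp
    _ ≤ 5 * k / k ^ 2 / ε ^ 2 := by
        gcongr
        exact expect_shortCount_sub_sq_le hk₀ hk
    _ = 5 / ε ^ 2 * (k : ℝ)⁻¹ := by field_simp

end ChordDiagram

theorem stmt7 (k : ℕ → ℕ) (hk1 : Filter.Tendsto k Filter.atTop Filter.atTop)
    (hk2 : ∀ n, 1 ≤ n → k n ≤ n - 1) :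
    ∀ ε : ℝ, 0 < ε →
      Filter.Tendsto
        (fun n : ℕ => prob n (fun C =>
          ε < |(shortCount n (k n) C : ℝ) / (k n : ℝ) - 1|))
        Filter.atTop (nhds 0) := by
  intro ε hε
  have hbound : Tendsto (fun n : ℕ => 5 / ε ^ 2 * (k n : ℝ)⁻¹) atTop (nhds 0) := by
    simpa using (tendsto_inv_atTop_zero.comp
      ((tendsto_natCast_atTop_atTop (R := ℝ)).comp hk1)).const_mul (5 / ε ^ 2)
  refine squeeze_zero' (.of_forall fun n => ChordDiagram.prob_nonneg _) ?_ hbound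
  filter_upwards [eventually_ge_atTop 1, hk1.eventually_ge_atTop 1] with n hn hkn
  have := hk2 n hn
  exact ChordDiagram.prob_lt_abs_shortCount_div_sub_one_le hkn (by omega) hε
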